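/- Let u ∈ C([0,T]; C¹_b(ℝ³,ℝ³)) with div u(t) = 0 for every t, and let X^x_s solve dX^x_s = u(s, X^x_s) ds + √(2ν) dW_s, X^x_0 = x. Then for each s and each ω, the map x ↦ X^x_s(ω) is a diffeomorphism of ℝ³ whose Jacobian determinant equals 1 everywhere, and consequently ∫_{ℝ³} φ(X^x_s(ω)) dx = ∫_{ℝ³} φ(x) dx for every φ ∈ L¹(ℝ³). -/

import Mathlib

open Set Real MeasureTheory

noncomputable section

local notation "E3" => EuclideanSpace ℝ (Fin 3)

open Filter Topology

/-- Integral form of Grönwall's inequality with constant coefficients. -/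
theorem le_mul_exp_of_le_add_mul_integral {g : ℝ → ℝ} {C K T : ℝ} (hg : Continuous g)
    (hg0 : ∀ s, 0 ≤ g s) (hC : 0 ≤ C) (hK : 0 ≤ K)
    (h : ∀ s ∈ Icc 0 T, g s ≤ C + K * ∫ r in (0 : ℝ)..s, g r) :
    ∀ s ∈ Icc 0 T, g s ≤ C * exp (K * s) := by
  intro s hs
  have hpos : ∀ t ∈ Icc 0 T, 0 ≤ C + K * ∫ r in (0 : ℝ)..t, g r := fun t ht ↦
    (hg0 t).trans (h t ht)
  have hder : ∀ t, HasDerivAt (fun t ↦ C + K * ∫ r in (0 : ℝ)..t, g r) (K * g t) t := fun t ↦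
    ((hg.integral_hasStrictDerivAt 0 t).hasDerivAt.const_mul K).const_add C
  have key := norm_le_gronwallBound_of_norm_deriv_right_le (δ := C) (K := K) (ε := 0)
    (fun t _ ↦ (hder t).continuousAt.continuousWithinAt)
    (fun t (_ : t ∈ Ico 0 T) ↦ (hder t).hasDerivWithinAt) (by simp [abs_of_nonneg hC])
    (fun t ht ↦ by
      have ht' := Ico_subset_Icc_self ht
      rw [add_zero, Real.norm_of_nonneg (mul_nonneg hK (hg0 t)),
        Real.norm_of_nonneg (hpos t ht')]
      exact mul_le_mul_of_nonneg_left (h t ht') hK) s hs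
  rw [gronwallBound_ε0, sub_zero, Real.norm_of_nonneg (hpos s hs)] at key
  exact (h s hs).trans key

theorem intervalIntegrable_mul_of_bounded {R : Type*} [NormedRing R] [NormedAlgebra ℝ R]
    {A Φ : ℝ → R} {M : ℝ} (hA : StronglyMeasurable A)
    (hM : ∀ r, ‖A r‖ ≤ M) (hΦ : Continuous Φ) (a b : ℝ) :
    IntervalIntegrable (fun r ↦ A r * Φ r) volume a b := by
  have hMi : IntervalIntegrable A volume a b :=
    (intervalIntegrable_const (c := M)).mono_fun hA.aestronglyMeasurable
      (ae_of_all _ fun r ↦ (hM r).trans (le_abs_self M))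
  exact hMi.mul_continuousOn hΦ.continuousOn

/-- A linear ODE with bounded measurable coefficients has a fundamental solution. -/
theorem exists_eq_one_add_integral_mul {R : Type*} [NormedRing R] [NormedAlgebra ℝ R]
    [CompleteSpace R] {A : ℝ → R} {M : ℝ} (hA : StronglyMeasurable A) (hM : ∀ r, ‖A r‖ ≤ M) :
    ∃ Φ : ℝ → R, Continuous Φ ∧ ∀ s, Φ s = 1 + ∫ r in (0 : ℝ)..s, A r * Φ r := by
  have hM0 : 0 ≤ M := (norm_nonneg _).trans (hM 0)
  let P : ℕ → ℝ → R := fun n ↦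
    Nat.rec (fun _ ↦ 1) (fun _ f s ↦ ∫ r in (0 : ℝ)..s, A r * f r) n
  have hP0 : P 0 = fun _ ↦ 1 := rfl
  have hPs : ∀ n s, P (n + 1) s = ∫ r in (0 : ℝ)..s, A r * P n r := fun _ _ ↦ rfl
  have hPc : ∀ n, Continuous (P n) := by
    intro n
    induction n with
    | zero => exact continuous_const
    | succ n ih =>
      exact intervalIntegral.continuous_primitive
        (fun a b ↦ intervalIntegrable_mul_of_bounded hA hM ih a b) 0
  have hPb : ∀ n s, ‖P n s‖ ≤ ‖(1 : R)‖ * ((M * |s|) ^ n / n.factorial) := by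
    intro n
    induction n with
    | zero => intro s; simp [hP0]
    | succ n ih =>
      intro s
      rw [hPs, intervalIntegral.norm_integral_eq_norm_integral_uIoc]
      calc ‖∫ r in uIoc 0 s, A r * P n r‖
          ≤ ∫ r in uIoc 0 s, ‖(1 : R)‖ * M ^ (n + 1) / n.factorial * |r - 0| ^ n := by
            refine norm_integral_le_of_norm_le ?_ (ae_of_all _ fun r ↦ ?_)
            · exact (Continuous.intervalIntegrable (by fun_prop) 0 s).def'
            · refine (norm_mul_le_of_le (hM r) (ih r)).trans (le_of_eq ?_)
              rw [sub_zero, mul_pow]; ring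
        _ = ‖(1 : R)‖ * ((M * |s|) ^ (n + 1) / (n + 1).factorial) := by
            rw [integral_const_mul, integral_pow_abs_sub_uIoc, sub_zero, Nat.factorial_succ,
              mul_pow]
            push_cast
            field_simp
  have hsum : ∀ B : ℝ, Summable fun n : ℕ ↦ ‖(1 : R)‖ * ((M * B) ^ n / n.factorial) := fun B ↦
    (Real.summable_pow_div_factorial _).mul_left _
  have hPsum : ∀ s, Summable fun n ↦ P n s := fun s ↦
    Summable.of_norm_bounded (hsum |s|) fun n ↦ hPb n s
  have hPbB : ∀ {B s : ℝ} (n : ℕ), |s| ≤ B →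
      ‖P n s‖ ≤ ‖(1 : R)‖ * ((M * B) ^ n / n.factorial) := fun n hs ↦
    (hPb n _).trans (by gcongr)
  have hcont : Continuous fun s ↦ ∑' n, P n s := by
    rw [continuous_iff_continuousAt]
    intro s
    refine ContinuousOn.continuousAt (s := Metric.closedBall 0 (|s| + 1))
      (continuousOn_tsum (fun n ↦ (hPc n).continuousOn) (hsum (|s| + 1)) fun n r hr ↦
        hPbB n (by simpa using hr)) ?_
    exact mem_nhds_iff.2 ⟨Metric.ball 0 (|s| + 1), Metric.ball_subset_closedBall,
      Metric.isOpen_ball, by simp⟩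
  refine ⟨fun s ↦ ∑' n, P n s, hcont, fun s ↦ ?_⟩
  have key : HasSum (fun n ↦ ∫ r in (0 : ℝ)..s, A r * P n r)
      (∫ r in (0 : ℝ)..s, A r * ∑' n, P n r) := by
    refine intervalIntegral.hasSum_integral_of_dominated_convergence
      (fun n _ ↦ M * (‖(1 : R)‖ * ((M * |s|) ^ n / n.factorial)))
      (fun n ↦ (hA.mul (hPc n).stronglyMeasurable).aestronglyMeasurable)
      (fun n ↦ ae_of_all _ fun r hr ↦ norm_mul_le_of_le (hM r) (hPbB n ?_))
      (ae_of_all _ fun _ _ ↦ (hsum |s|).mul_left M) intervalIntegrable_const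
      (ae_of_all _ fun r _ ↦ (hPsum r).hasSum.mul_left (A r))
    simpa using abs_sub_left_of_mem_uIcc (uIoc_subset_uIcc hr)
  beta_reduce
  rw [(hPsum s).tsum_eq_zero_add, ← key.tsum_eq]
  rfl

/-- Grönwall's inequality for a curve whose velocity is bounded by an affine function of its norm. -/
theorem norm_le_of_eq_add_integral {F : Type*} [NormedAddCommGroup F] [NormedSpace ℝ F]
    {D p : ℝ → F} {c : F} {e : ℝ → ℝ} {K T : ℝ} (hD : Continuous D) (hK : 0 ≤ K)
    (he : IntervalIntegrable e volume 0 T) (he0 : ∀ r, 0 ≤ e r)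
    (h : ∀ s ∈ Icc 0 T, D s = c + ∫ r in (0 : ℝ)..s, p r)
    (hp : ∀ r ∈ Icc 0 T, ‖p r‖ ≤ e r + K * ‖D r‖) :
    ∀ s ∈ Icc 0 T, ‖D s‖ ≤ (‖c‖ + ∫ r in (0 : ℝ)..T, e r) * exp (K * s) := by
  intro s hs
  have hT : 0 ≤ T := hs.1.trans hs.2
  refine le_mul_exp_of_le_add_mul_integral (T := T) hD.norm (fun _ ↦ norm_nonneg _)
    (add_nonneg (norm_nonneg _) (intervalIntegral.integral_nonneg hT fun r _ ↦ he0 r)) hK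
    (fun t ht ↦ ?_) s hs
  have het : IntervalIntegrable e volume 0 t :=
    he.mono_set (by rw [uIcc_of_le hT, uIcc_of_le ht.1]; exact Icc_subset_Icc_right ht.2)
  have hDt : IntervalIntegrable (fun r ↦ K * ‖D r‖) volume 0 t :=
    (hD.norm.const_mul K).intervalIntegrable 0 t
  calc ‖D t‖ ≤ ‖c‖ + ‖∫ r in (0 : ℝ)..t, p r‖ := by rw [h t ht]; exact norm_add_le _ _
    _ ≤ ‖c‖ + ∫ r in (0 : ℝ)..t, (e r + K * ‖D r‖) := by
        gcongr
        exact intervalIntegral.norm_integral_le_of_norm_le ht.1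
          (ae_of_all _ fun r hr ↦ hp r ⟨hr.1.le, hr.2.trans ht.2⟩) (het.add hDt)
    _ = ‖c‖ + (∫ r in (0 : ℝ)..t, e r) + K * ∫ r in (0 : ℝ)..t, ‖D r‖ := by
        rw [intervalIntegral.integral_add het hDt, intervalIntegral.integral_const_mul, add_assoc]
    _ ≤ _ := by
        gcongr
        exact intervalIntegral.integral_mono_interval le_rfl ht.1 ht.2 (ae_of_all _ he0) he

section Flow

variable {E : Type*} [NormedAddCommGroup E] [NormedSpace ℝ E] {b : ℝ → E → E} {Y : E → ℝ → E}
  {M T : ℝ}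

theorem norm_flow_sub_le (hM : 0 ≤ M) (hb : Continuous (Function.uncurry b))
    (hbl : ∀ r x y, ‖b r x - b r y‖ ≤ M * ‖x - y‖) (hYc : ∀ x, Continuous (Y x))
    (hY : ∀ x, ∀ s ∈ Icc 0 T, Y x s = x + ∫ r in (0 : ℝ)..s, b r (Y x r)) (x y : E) :
    ∀ s ∈ Icc 0 T, ‖Y x s - Y y s‖ ≤ exp (M * s) * ‖x - y‖ := by
  intro s hs
  have hc : ∀ x, Continuous fun r ↦ b r (Y x r) := fun x ↦ hb.comp (continuous_id.prodMk (hYc x))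
  have := norm_le_of_eq_add_integral (e := fun _ ↦ 0) (c := x - y)
    (p := fun r ↦ b r (Y x r) - b r (Y y r)) ((hYc x).sub (hYc y)) hM intervalIntegrable_const
    (fun _ ↦ le_rfl) (fun t ht ↦ ?_) (fun r _ ↦ by simpa using hbl r (Y x r) (Y y r)) s hs
  · simpa [mul_comm] using this
  · rw [Pi.sub_apply, hY x t ht, hY y t ht, intervalIntegral.integral_sub
      ((hc x).intervalIntegrable 0 t) ((hc y).intervalIntegrable 0 t)]
    abel

theorem norm_sub_le_flow (hM : 0 ≤ M) (hb : Continuous (Function.uncurry b))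
    (hbl : ∀ r x y, ‖b r x - b r y‖ ≤ M * ‖x - y‖) (hYc : ∀ x, Continuous (Y x))
    (hY : ∀ x, ∀ s ∈ Icc 0 T, Y x s = x + ∫ r in (0 : ℝ)..s, b r (Y x r)) (x y : E) :
    ∀ s ∈ Icc 0 T, ‖x - y‖ ≤ exp (M * s) * ‖Y x s - Y y s‖ := by
  intro s hs
  have hc : ∀ x, Continuous fun r ↦ b r (Y x r) := fun x ↦ hb.comp (continuous_id.prodMk (hYc x))
  have h0 : ∀ x, Y x 0 = x := fun x ↦ by simpa using hY x 0 ⟨le_rfl, hs.1.trans hs.2⟩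
  have hback : ∀ x, ∀ t ∈ Icc 0 s,
      Y x (s - t) = Y x s - ∫ r in (0 : ℝ)..t, b (s - r) (Y x (s - r)) := fun x t ht ↦ by
    rw [hY x s hs, hY x (s - t) ⟨by linarith [ht.2], by linarith [ht.1, hs.2]⟩,
      intervalIntegral.integral_comp_sub_left (fun r ↦ b r (Y x r)), sub_zero, add_sub_assoc,
      intervalIntegral.integral_interval_sub_interval_comm' ((hc x).intervalIntegrable _ _)
      ((hc x).intervalIntegrable _ _) ((hc x).intervalIntegrable _ _)]
    simp [intervalIntegral.integral_symm 0 (s - t)]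
  have hci : ∀ x t, IntervalIntegrable (fun r ↦ b (s - r) (Y x (s - r))) volume 0 t := fun x t ↦
    ((hc x).comp (continuous_const.sub continuous_id)).intervalIntegrable 0 t
  have := norm_le_of_eq_add_integral (e := fun _ ↦ 0) (c := Y x s - Y y s) (T := s)
    (D := fun t ↦ Y x (s - t) - Y y (s - t))
    (p := fun r ↦ -(b (s - r) (Y x (s - r)) - b (s - r) (Y y (s - r))))
    (((hYc x).sub (hYc y)).comp (continuous_const.sub continuous_id)) hM intervalIntegrable_const
    (fun _ ↦ le_rfl) (fun t ht ↦ ?_)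
    (fun r _ ↦ by simpa only [norm_neg, zero_add] using hbl (s - r) _ _) s ⟨hs.1, le_rfl⟩
  · simpa [h0, mul_comm] using this
  · rw [hback x t ht, hback y t ht, intervalIntegral.integral_neg, intervalIntegral.integral_sub
      (hci x t) (hci y t)]
    abel

/-- A flow of a drift that is `C¹` in space with bounded derivative is differentiable in the
initial condition, and the derivative solves the linearized equation. The derivative of the drift
is only required to be measurable in time. -/
theorem exists_flow_hasFDerivAt [FiniteDimensional ℝ E] (hM : 0 ≤ M)
    (hb : Continuous (Function.uncurry b)) (hb1 : ∀ r, ContDiff ℝ 1 (b r))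
    (hbd : ∀ r x, ‖fderiv ℝ (b r) x‖ ≤ M) (hYc : ∀ x, Continuous (Y x))
    (hY : ∀ x, ∀ s ∈ Icc 0 T, Y x s = x + ∫ r in (0 : ℝ)..s, b r (Y x r)) :
    ∃ Φ : E → ℝ → E →L[ℝ] E, (∀ x, Continuous (Φ x)) ∧
      (∀ x s, Φ x s = 1 + ∫ r in (0 : ℝ)..s, fderiv ℝ (b r) (Y x r) * Φ x r) ∧
      (∀ x, StronglyMeasurable fun r ↦ fderiv ℝ (b r) (Y x r)) ∧
      ∀ s ∈ Icc 0 T, (∀ x, HasFDerivAt (fun x ↦ Y x s) (Φ x s) x) ∧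
        Continuous fun x ↦ Φ x s := by
  borelize E
  have := FiniteDimensional.complete ℝ E
  have := FiniteDimensional.proper_real E
  have hbl : ∀ r x y, ‖b r x - b r y‖ ≤ M * ‖x - y‖ := fun r x y ↦
    convex_univ.norm_image_sub_le_of_norm_fderiv_le
      (fun z _ ↦ ((hb1 r).differentiable one_ne_zero) z) (fun z _ ↦ hbd r z) (mem_univ y)
      (mem_univ x)
  have hc : ∀ x, Continuous fun r ↦ b r (Y x r) := fun x ↦ hb.comp (continuous_id.prodMk (hYc x))
  have hA : ∀ x, StronglyMeasurable fun r ↦ fderiv ℝ (b r) (Y x r) := fun x ↦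
    ((measurable_fderiv_with_param ℝ hb).comp
      (measurable_id.prodMk (hYc x).measurable)).stronglyMeasurable
  choose Φ hΦc hΦ using fun x ↦ exists_eq_one_add_integral_mul (hA x) fun r ↦ hbd r (Y x r)
  have hint : ∀ x x' s, IntervalIntegrable (fun r ↦ fderiv ℝ (b r) (Y x r) * Φ x' r) volume 0 s :=
    fun x x' s ↦ intervalIntegrable_mul_of_bounded (hA x) (fun r ↦ hbd r _) (hΦc x') 0 s
  have hlip := norm_flow_sub_le hM hb hbl hYc hY
  have hYt : ∀ s ∈ Icc 0 T, Continuous fun x ↦ Y x s := fun s hs ↦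
    (LipschitzWith.of_dist_le' (K := exp (M * s)) fun x y ↦ by
      simpa [dist_eq_norm] using hlip x y s hs).continuous
  refine ⟨Φ, hΦc, hΦ, hA, fun s hs ↦ ⟨fun x ↦ ?_, ?_⟩⟩
  · have hT : 0 ≤ T := hs.1.trans hs.2
    let e : E → ℝ → ℝ := fun x' r ↦
      ‖b r (Y x' r) - b r (Y x r) - fderiv ℝ (b r) (Y x r) (Y x' r - Y x r)‖
    have hem : ∀ x', StronglyMeasurable (e x') := fun x' ↦
      (((hc x').sub (hc x)).stronglyMeasurable.sub
        (isBoundedBilinearMap_apply.continuous.comp_stronglyMeasurable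
          ((hA x).prodMk ((hYc x').sub (hYc x)).stronglyMeasurable))).norm
    have heb : ∀ x', ∀ r ∈ Icc 0 T, e x' r ≤ 2 * M * exp (M * T) * ‖x' - x‖ := fun x' r hr ↦ by
      have h1 : ‖Y x' r - Y x r‖ ≤ exp (M * T) * ‖x' - x‖ :=
        (hlip x' x r hr).trans (by gcongr; exact hr.2)
      calc e x' r ≤ M * ‖Y x' r - Y x r‖ + M * ‖Y x' r - Y x r‖ :=
            (norm_sub_le _ _).trans (add_le_add (hbl r _ _)
              ((fderiv ℝ (b r) (Y x r)).le_of_opNorm_le (hbd r _) _))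
        _ ≤ M * (exp (M * T) * ‖x' - x‖) + M * (exp (M * T) * ‖x' - x‖) := by gcongr
        _ = _ := by ring
    have hei : ∀ x', IntervalIntegrable (e x') volume 0 T := fun x' ↦ by
      refine (intervalIntegrable_const (c := 2 * M * exp (M * T) * ‖x' - x‖)).mono_fun
        (hem x').aestronglyMeasurable ?_
      filter_upwards [ae_restrict_mem measurableSet_uIoc] with r hr
      rw [uIoc_of_le hT] at hr
      rw [Real.norm_of_nonneg (norm_nonneg _)]
      exact (heb x' r ⟨hr.1.le, hr.2⟩).trans (le_abs_self _)
    have hlim : Tendsto (fun x' ↦ ∫ r in (0 : ℝ)..T, ‖x' - x‖⁻¹ * e x' r) (𝓝 x) (𝓝 0) := by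
      have : Tendsto (fun x' ↦ ∫ r in (0 : ℝ)..T, ‖x' - x‖⁻¹ * e x' r) (𝓝 x)
          (𝓝 (∫ r in (0 : ℝ)..T, (0 : ℝ))) := by
        refine intervalIntegral.tendsto_integral_filter_of_dominated_convergence
          (fun _ ↦ 2 * M * exp (M * T))
          (Eventually.of_forall fun x' ↦ ((hem x').const_mul _).aestronglyMeasurable)
          (Eventually.of_forall fun x' ↦ ae_of_all _ fun r hr ↦ ?_) intervalIntegrable_const
          (ae_of_all _ fun r hr ↦ ?_)
        · rw [uIoc_of_le hT] at hr
          rw [Real.norm_of_nonneg (by positivity)]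
          refine inv_mul_le_of_le_mul₀ (norm_nonneg _) (by positivity) ?_
          rw [mul_comm]
          exact heb x' r ⟨hr.1.le, hr.2⟩
        · rw [uIoc_of_le hT] at hr
          have hr' : r ∈ Icc 0 T := ⟨hr.1.le, hr.2⟩
          have h1 := ((hb1 r).differentiable one_ne_zero (Y x r)).hasFDerivAt.isLittleO.comp_tendsto
            ((hYt r hr').tendsto x)
          have h2 : (fun x' ↦ Y x' r - Y x r) =O[𝓝 x] fun x' ↦ ‖x' - x‖ :=
            Asymptotics.IsBigO.of_bound (exp (M * r)) (Eventually.of_forall fun x' ↦ by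
              simpa using hlip x' x r hr')
          simpa [div_eq_inv_mul, e] using (h1.norm_left.trans_isBigO h2).tendsto_div_nhds_zero
      simpa using this
    rw [hasFDerivAt_iff_tendsto]
    refine squeeze_zero (fun _ ↦ by positivity) (fun x' ↦ ?_)
      (by simpa using hlim.mul_const (exp (M * s)))
    have hD := norm_le_of_eq_add_integral (D := fun t ↦ Y x' t - Y x t - Φ x t (x' - x))
      (p := fun r ↦ b r (Y x' r) - b r (Y x r) - (fderiv ℝ (b r) (Y x r) * Φ x r) (x' - x))
      (c := 0) (((hYc x').sub (hYc x)).sub ((hΦc x).clm_apply continuous_const)) hM (hei x')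
      (fun r ↦ norm_nonneg _) (fun t ht ↦ ?_) (fun r _ ↦ ?_) s hs
    · rw [mul_assoc]
      gcongr
      simpa using hD
    · have hi := hint x x t
      have hi' : IntervalIntegrable
          (fun r ↦ (fderiv ℝ (b r) (Y x r) * Φ x r) (x' - x)) volume 0 t :=
        ⟨(ContinuousLinearMap.apply ℝ E (x' - x)).integrable_comp hi.1,
          (ContinuousLinearMap.apply ℝ E (x' - x)).integrable_comp hi.2⟩
      have hbi : IntervalIntegrable (fun r ↦ b r (Y x' r) - b r (Y x r)) volume 0 t :=
        ((hc x').sub (hc x)).intervalIntegrable 0 t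
      rw [intervalIntegral.integral_sub hbi hi',
        intervalIntegral.integral_sub ((hc x').intervalIntegrable 0 t)
        ((hc x).intervalIntegrable 0 t), hY x' t ht, hY x t ht, hΦ x t,
        add_apply, ContinuousLinearMap.intervalIntegral_apply hi]
      simp only [one_apply_eq_self]
      abel
    · refine le_trans (le_of_eq ?_) ((norm_add_le _ _).trans (add_le_add_right
        ((fderiv ℝ (b r) (Y x r)).le_of_opNorm_le (hbd r (Y x r))
          (Y x' r - Y x r - Φ x r (x' - x))) _))
      congr 1
      simp only [mul_apply_eq_comp, map_sub]
      abel
  · have hT : 0 ≤ T := hs.1.trans hs.2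
    rw [continuous_iff_continuousAt]
    intro x
    let e : E → ℝ → ℝ := fun x' r ↦
      ‖(fderiv ℝ (b r) (Y x' r) - fderiv ℝ (b r) (Y x r)) * Φ x r‖
    have hem : ∀ x', StronglyMeasurable (e x') := fun x' ↦
      (((hA x').sub (hA x)).mul (hΦc x).stronglyMeasurable).norm
    have heb : ∀ x' r, e x' r ≤ (M + M) * ‖Φ x r‖ := fun x' r ↦
      norm_mul_le_of_le (norm_sub_le_of_le (hbd r _) (hbd r _)) le_rfl
    have hbi : IntervalIntegrable (fun r ↦ (M + M) * ‖Φ x r‖) volume 0 T :=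
      ((hΦc x).norm.const_mul _).intervalIntegrable 0 T
    have hei : ∀ x', IntervalIntegrable (e x') volume 0 T := fun x' ↦
      hbi.mono_fun (hem x').aestronglyMeasurable (ae_of_all _ fun r ↦ by
        beta_reduce
        rw [Real.norm_of_nonneg (norm_nonneg _)]
        exact (heb x' r).trans (le_abs_self _))
    have hlim : Tendsto (fun x' ↦ ∫ r in (0 : ℝ)..T, e x' r) (𝓝 x) (𝓝 0) := by
      have : Tendsto (fun x' ↦ ∫ r in (0 : ℝ)..T, e x' r) (𝓝 x)
          (𝓝 (∫ r in (0 : ℝ)..T, (0 : ℝ))) := by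
        refine intervalIntegral.tendsto_integral_filter_of_dominated_convergence
          (fun r ↦ (M + M) * ‖Φ x r‖)
          (Eventually.of_forall fun x' ↦ (hem x').aestronglyMeasurable)
          (Eventually.of_forall fun x' ↦ ae_of_all _ fun r hr ↦ ?_) hbi
          (ae_of_all _ fun r hr ↦ ?_)
        · rw [Real.norm_of_nonneg (norm_nonneg _)]
          exact heb x' r
        · rw [uIoc_of_le hT] at hr
          have h1 : Continuous fun x' ↦ e x' r :=
            (((((hb1 r).continuous_fderiv one_ne_zero).comp
              (hYt r ⟨hr.1.le, hr.2⟩)).sub continuous_const).mul continuous_const).norm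
          simpa [e] using h1.tendsto x
      simpa using this
    rw [ContinuousAt, tendsto_iff_norm_sub_tendsto_zero]
    refine squeeze_zero (fun _ ↦ norm_nonneg _) (fun x' ↦ ?_)
      (by simpa using hlim.mul_const (exp (M * s)))
    have hD := norm_le_of_eq_add_integral (D := fun t ↦ Φ x' t - Φ x t)
      (p := fun r ↦ fderiv ℝ (b r) (Y x' r) * Φ x' r - fderiv ℝ (b r) (Y x r) * Φ x r)
      (c := 0) ((hΦc x').sub (hΦc x)) hM (hei x')
      (fun r ↦ norm_nonneg _) (fun t ht ↦ ?_) (fun r _ ↦ ?_) s hs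
    · simpa using hD
    · rw [intervalIntegral.integral_sub (hint _ _ _) (hint _ _ _)]
      nth_rewrite 1 [hΦ x' t, hΦ x t]
      abel
    · refine le_trans (le_of_eq ?_) ((norm_add_le _ _).trans (add_le_add_right
        (norm_mul_le_of_le (hbd r (Y x' r)) (le_refl ‖Φ x' r - Φ x r‖)) _))
      congr 1
      noncomm_ring

end Flow

/-- Liouville's formula for a trace-free linear equation in dimension three. -/
theorem det_eq_one_of_trace_eq_zero {A Φ : ℝ → E3 →L[ℝ] E3} {T : ℝ}
    (hint : ∀ s, IntervalIntegrable (fun r ↦ A r * Φ r) volume 0 s)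
    (hΦ : ∀ s, Φ s = 1 + ∫ r in (0 : ℝ)..s, A r * Φ r)
    (htr : ∀ r, ∑ i, A r (EuclideanSpace.single i 1) i = 0) :
    ∀ s ∈ Icc 0 T, (Φ s).det = 1 := by
  let ev : Fin 3 → Fin 3 → (E3 →L[ℝ] E3) →L[ℝ] ℝ := fun i j ↦
    (EuclideanSpace.proj i).comp (ContinuousLinearMap.apply ℝ E3 (EuclideanSpace.single j 1))
  have hev : ∀ i j B, ev i j B = B (EuclideanSpace.single j 1) i := fun _ _ _ ↦ rfl
  have hmul : ∀ i j (B C : E3 →L[ℝ] E3), ev i j (B * C) = ∑ k, ev i k B * ev k j C := by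
    intro i j B C
    have hC : C (EuclideanSpace.single j 1) =
        ∑ k, ev k j C • (EuclideanSpace.single k 1 : E3) := by
      ext l
      simp [hev, Finset.sum_apply, Pi.single_apply]
    rw [hev, mul_apply_eq_comp, hC, map_sum]
    simp [hev, mul_comm]
  have hdet : ∀ B : E3 →L[ℝ] E3, B.det = (Matrix.of fun i j ↦ ev i j B).det := fun B ↦ by
    rw [ContinuousLinearMap.det,
      ← LinearMap.det_toMatrix (EuclideanSpace.basisFun (Fin 3) ℝ).toBasis]
    congr 1
  have hdet3 : ∀ B : E3 →L[ℝ] E3, B.det =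
      ev 0 0 B * ev 1 1 B * ev 2 2 B - ev 0 0 B * ev 1 2 B * ev 2 1 B
      - ev 0 1 B * ev 1 0 B * ev 2 2 B + ev 0 1 B * ev 1 2 B * ev 2 0 B
      + ev 0 2 B * ev 1 0 B * ev 2 1 B - ev 0 2 B * ev 1 1 B * ev 2 0 B := fun B ↦ by
    rw [hdet, Matrix.det_fin_three]; rfl
  have hΦev : ∀ i j, (fun s ↦ ev i j (Φ s)) =
      fun s ↦ ev i j 1 + ∫ r in (0 : ℝ)..s, ev i j (A r * Φ r) := fun i j ↦ by
    funext s
    rw [hΦ s, map_add, ContinuousLinearMap.intervalIntegral_comp_comm _ (hint s)]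
  have hac : ∀ i j, AbsolutelyContinuousOnInterval (fun s ↦ ev i j (Φ s)) 0 T := fun i j ↦ by
    rw [hΦev]
    exact (LipschitzWith.const _).lipschitzOnWith.absolutelyContinuousOnInterval.add
      (IntervalIntegrable.absolutelyContinuousOnInterval_intervalIntegral
        ⟨(ev i j).integrable_comp (hint T).1, (ev i j).integrable_comp (hint T).2⟩ left_mem_uIcc)
  have hderiv : ∀ᵐ s, s ∈ uIcc 0 T → ∀ i j,
      HasDerivAt (fun s ↦ ev i j (Φ s)) (ev i j (A s * Φ s)) s := by
    filter_upwards [(hint T).ae_hasDerivAt_integral] with s hs hsT i j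
    have h1 := (hs hsT 0 left_mem_uIcc).const_add 1
    rw [← funext hΦ] at h1
    exact (ev i j).hasFDerivAt.comp_hasDerivAt s h1
  obtain ⟨C, hC⟩ := AbsolutelyContinuousOnInterval.const_of_ae_hasDerivAt_zero
    (f := fun s ↦ (Φ s).det) (a := 0) (b := T)
    (by
      simp only [hdet3]
      have h3 : ∀ i j k l m n, AbsolutelyContinuousOnInterval
          (fun s ↦ ev i j (Φ s) * ev k l (Φ s) * ev m n (Φ s)) 0 T := fun i j k l m n ↦
        ((hac i j).mul (hac k l)).mul (hac m n)
      exact (((((h3 ..).sub (h3 ..)).sub (h3 ..)).add (h3 ..)).add (h3 ..)).sub (h3 ..))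
    (by
      filter_upwards [hderiv] with s hs hsT
      have h := hs hsT
      have h3 := fun i j k l m n ↦ ((h i j).mul (h k l)).mul (h m n)
      simp only [hdet3]
      convert! (((((h3 0 0 1 1 2 2).sub (h3 0 0 1 2 2 1)).sub (h3 0 1 1 0 2 2)).add
        (h3 0 1 1 2 2 0)).add (h3 0 2 1 0 2 1)).sub (h3 0 2 1 1 2 0) using 1
      have ht : ev 2 2 (A s) = - ev 0 0 (A s) - ev 1 1 (A s) := by
        have := htr s
        rw [Fin.sum_univ_three] at this
        simp only [hev]
        linarith
      simp only [Pi.mul_apply, hmul, Fin.sum_univ_three, ht]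
      ring)
  intro s hs
  have hT : 0 ≤ T := hs.1.trans hs.2
  rw [uIcc_of_le hT] at hC
  have h0 : (Φ 0).det = 1 := by
    rw [hΦ 0, intervalIntegral.integral_same, add_zero]
    exact LinearMap.det_id
  exact (hC s hs).trans ((hC 0 ⟨le_rfl, hT⟩).symm.trans h0)

/-- A bijective `C¹` map with Jacobian determinant one preserves Lebesgue measure. -/
theorem measurePreserving_of_det_eq_one {E : Type*} [NormedAddCommGroup E] [NormedSpace ℝ E]
    [FiniteDimensional ℝ E] [MeasurableSpace E] [BorelSpace E] (μ : Measure E)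
    [μ.IsAddHaarMeasure] (F : E ≃ₜ E) {F' : E → E →L[ℝ] E} (hF : ∀ x, HasFDerivAt F (F' x) x)
    (hdet : ∀ x, (F' x).det = 1) : MeasurePreserving F μ μ := by
  refine ⟨F.measurable, Measure.ext fun s hs ↦ ?_⟩
  rw [Measure.map_apply F.measurable hs]
  have h := lintegral_abs_det_fderiv_eq_addHaar_image μ (F.measurable hs)
    (fun x _ ↦ (hF x).hasFDerivWithinAt) F.injective.injOn
  rw [image_preimage_eq s F.surjective] at h
  simpa [hdet] using h

/-- for a divergence-free drift `u ∈ C([0,T];C¹_b)` the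
stochastic flow `x ↦ X^x_s` of `dX = u dt + √(2ν) dW` (written pathwise along a
fixed Brownian path `W`, the noise being additive) is a diffeomorphism of `ℝ³`
with Jacobian determinant identically `1`; consequently it preserves Lebesgue
measure and `∫ φ(X^x_s) dx = ∫ φ(x) dx` for every `φ ∈ L¹`. -/
theorem lagrangian_flow_volume_preserving
    (T ν : ℝ) (hT : 0 ≤ T) (hν : 0 < ν)
    (u : ℝ → E3 → E3) (hu : Continuous (Function.uncurry u))
    (hu1 : ∀ r, ContDiff ℝ 1 (u r))
    (hub : ∃ M, ∀ r x, ‖u r x‖ + ‖fderiv ℝ (u r) x‖ ≤ M)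
    (hdiv : ∀ r x, ∑ i, fderiv ℝ (u r) x (EuclideanSpace.single i 1) i = 0)
    (W : ℝ → E3) (hW : Continuous W) (hW0 : W 0 = 0)
    (X : E3 → ℝ → E3) (hXc : ∀ x, Continuous (X x))
    (hX : ∀ x, ∀ s ∈ Icc 0 T,
      X x s = x + (∫ r in (0 : ℝ)..s, u r (X x r)) + Real.sqrt (2 * ν) • W s) :
    ∀ s ∈ Icc 0 T,
      (∃ F : E3 ≃ E3, (∀ x, F x = X x s) ∧
        ContDiff ℝ 1 (F : E3 → E3) ∧ ContDiff ℝ 1 (F.symm : E3 → E3)) ∧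
      (∀ x, (fderiv ℝ (fun x => X x s) x).det = 1) ∧
      MeasurePreserving (fun x => X x s) volume volume ∧
      (∀ φ : E3 → ℝ, Integrable φ volume →
        ∫ x, φ (X x s) = ∫ x, φ x) := by
  intro s hs
  obtain ⟨M, hMb⟩ := hub
  have hM : 0 ≤ M := (add_nonneg (norm_nonneg _) (norm_nonneg _)).trans (hMb 0 0)
  let c : ℝ → E3 := fun r ↦ √(2 * ν) • W r
  have hc : Continuous c := hW.fun_const_smul _
  let b : ℝ → E3 → E3 := fun r y ↦ u r (y + c r)
  let Y : E3 → ℝ → E3 := fun x r ↦ X x r - c r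
  have hb : Continuous (Function.uncurry b) :=
    hu.comp (continuous_fst.prodMk (continuous_snd.add (hc.comp continuous_fst)))
  have hb1 : ∀ r, ContDiff ℝ 1 (b r) := fun r ↦
    (hu1 r).comp (contDiff_id.add contDiff_const)
  have hbf : ∀ r y, fderiv ℝ (b r) y = fderiv ℝ (u r) (y + c r) := fun r y ↦
    fderiv_comp_add_right (c r)
  have hbd : ∀ r y, ‖fderiv ℝ (b r) y‖ ≤ M := fun r y ↦ by
    rw [hbf]
    exact (le_add_of_nonneg_left (norm_nonneg _)).trans (hMb r _)
  have hbl : ∀ r x y, ‖b r x - b r y‖ ≤ M * ‖x - y‖ := fun r x y ↦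
    convex_univ.norm_image_sub_le_of_norm_fderiv_le
      (fun z _ ↦ ((hb1 r).differentiable one_ne_zero) z) (fun z _ ↦ hbd r z) (mem_univ y)
      (mem_univ x)
  have hYc : ∀ x, Continuous (Y x) := fun x ↦ (hXc x).sub hc
  have hY : ∀ x, ∀ s ∈ Icc 0 T, Y x s = x + ∫ r in (0 : ℝ)..s, b r (Y x r) := fun x s hs ↦ by
    simp only [Y, b, sub_add_cancel, c]
    nth_rewrite 1 [hX x s hs]
    rw [add_sub_cancel_right]
  obtain ⟨Φ, hΦc, hΦ, hA, hd⟩ := exists_flow_hasFDerivAt hM hb hb1 hbd hYc hY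
  obtain ⟨hYd, hYΦ⟩ := hd s hs
  have hXd : ∀ x, HasFDerivAt (fun x ↦ X x s) (Φ x s) x := fun x ↦ by
    simpa [Y] using (hYd x).add_const (c s)
  have hdet : ∀ x, (Φ x s).det = 1 := fun x ↦
    det_eq_one_of_trace_eq_zero
      (intervalIntegrable_mul_of_bounded (hA x) (fun r ↦ hbd r _) (hΦc x) 0) (hΦ x)
      (fun r ↦ by simpa only [hbf] using hdiv r _) s hs
  let e : E3 → E3 ≃L[ℝ] E3 := fun x ↦
    (Φ x s).toContinuousLinearEquivOfDetNeZero ((hdet x).trans_ne one_ne_zero)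
  have hXe : ∀ x, HasFDerivAt (fun x ↦ X x s) (e x : E3 →L[ℝ] E3) x := fun x ↦ by
    simpa only [e, ContinuousLinearMap.coe_toContinuousLinearEquivOfDetNeZero] using hXd x
  have hX1 : ContDiff ℝ 1 fun x ↦ X x s :=
    contDiff_one_iff_hasFDerivAt.2 ⟨fun x ↦ Φ x s, hYΦ, hXd⟩
  have hanti : AntilipschitzWith (Real.toNNReal (exp (M * s))) fun x ↦ X x s :=
    AntilipschitzWith.of_le_mul_dist fun x y ↦ by
      rw [Real.coe_toNNReal _ (exp_pos _).le, dist_eq_norm, dist_eq_norm]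
      simpa [Y] using norm_sub_le_flow hM hb hbl hYc hY x y s hs
  have hopen : IsOpenMap fun x ↦ X x s := isOpenMap_of_hasStrictFDerivAt_equiv fun x ↦
    hX1.contDiffAt.hasStrictFDerivAt' (hXe x) one_ne_zero
  have hclosed : IsClosed (range fun x ↦ X x s) :=
    hanti.isClosed_range (LipschitzWith.of_dist_le' (K := exp (M * s)) fun x y ↦ by
      simpa [Y, dist_eq_norm] using norm_flow_sub_le hM hb hbl hYc hY x y s hs).uniformContinuous
  have hsurj : Function.Surjective fun x ↦ X x s := range_eq_univ.1
    (IsClopen.eq_univ ⟨hclosed, hopen.isOpen_range⟩ (range_nonempty _))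
  let F : E3 ≃ₜ E3 := (Equiv.ofBijective _ ⟨hanti.injective, hsurj⟩).toHomeomorphOfContinuousOpen
    hX1.continuous hopen
  have hF : MeasurePreserving F volume volume := measurePreserving_of_det_eq_one _ F hXd hdet
  refine ⟨⟨F.toEquiv, fun _ ↦ rfl, hX1, F.contDiff_symm hXe hX1⟩, fun x ↦ ?_, hF, fun φ _ ↦ ?_⟩
  · rw [(hXd x).fderiv, hdet x]
  · exact hF.integral_comp F.measurableEmbedding φ

end
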